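/- Let ξ : ℝ² → ℝ be a smooth ℤ²-periodic function and let v = (v¹,v²) : ℝ² → ℝ² be a smooth ℤ²-periodic divergence-free vector field (∂₁v¹ + ∂₂v² = 0). Then | ∫_Q (Δξ) v² dx | ≤ ‖∇ξ‖_{L²} ‖∂₁v‖_{L²}, where Q = [0,1]², ‖∇ξ‖_{L²}² = ∫_Q ((∂₁ξ)² + (∂₂ξ)²) dx, and ‖∂₁v‖_{L²}² = ∫_Q ((∂₁v¹)² + (∂₁v²)²) dx. (Only the horizontal derivative of v appears on the right-hand side; this is the key anisotropic estimate for the buoyancy term.) -/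

import Mathlib

/-!
Write `ξ_j = ∂_j ξ`. Since `∂₂v² = -∂₁v¹`, the product rule gives the pointwise identity
`(Δξ) v² = ∂₁(ξ₁ v²) + ∂₂(ξ₂ v²) + (ξ₂ ∂₁v¹ - ξ₁ ∂₁v²)`.
The first two terms are derivatives of periodic functions and integrate to zero over `Q`
(`integral_pd_eq_zero`, from the divergence theorem on the box), and the remaining term is the
inner product of the rotated gradient `(ξ₂, -ξ₁)` with `∂₁v`, which is bounded by the
Cauchy–Schwarz inequality for vector fields (`cauchy_schwarz_Q2`).
-/

open MeasureTheory

/-- Partial derivative in direction `j`. -/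
noncomputable def pd (j : Fin 2) (f : (Fin 2 → ℝ) → ℝ) (x : Fin 2 → ℝ) : ℝ :=
  fderiv ℝ f x (Pi.single j 1)

/-- `f` is `ℤ²`-periodic. -/
def Periodic2 (f : (Fin 2 → ℝ) → ℝ) : Prop :=
  ∀ (x : Fin 2 → ℝ) (k : Fin 2 → ℤ), f (x + fun i => (k i : ℝ)) = f x

/-- The fundamental domain `Q = [0,1]²`. -/
def Q2 : Set (Fin 2 → ℝ) := Set.Icc 0 1

lemma continuous_integrableOn_Q2 {f : (Fin 2 → ℝ) → ℝ} (hf : Continuous f) :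
    IntegrableOn f Q2 :=
  hf.continuousOn.integrableOn_compact isCompact_Icc

lemma integral_Q2_add_add {f g h : (Fin 2 → ℝ) → ℝ} (hf : IntegrableOn f Q2)
    (hg : IntegrableOn g Q2) (hh : IntegrableOn h Q2) :
    ∫ x in Q2, (f x + g x + h x)
      = (∫ x in Q2, f x) + (∫ x in Q2, g x) + ∫ x in Q2, h x := by
  have hfg : IntegrableOn (fun x => f x + g x) Q2 := hf.add hg
  rw [integral_add hfg hh, integral_add hf hg]

lemma contDiff_pd {f : (Fin 2 → ℝ) → ℝ} (hf : ContDiff ℝ (⊤ : ℕ∞) f) (j : Fin 2) :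
    ContDiff ℝ (⊤ : ℕ∞) (pd j f) := by
  unfold pd
  exact (hf.fderiv_right (m := (⊤ : ℕ∞)) (by simp)).clm_apply contDiff_const

lemma Periodic2.pd {f : (Fin 2 → ℝ) → ℝ} (hf : Periodic2 f) (j : Fin 2) :
    Periodic2 (pd j f) := by
  intro x k
  have h : (fun y => f (y + fun i => (k i : ℝ))) = f := funext fun y => hf y k
  unfold _root_.pd
  rw [← fderiv_comp_add_right, h]

lemma Periodic2.mul {f g : (Fin 2 → ℝ) → ℝ} (hf : Periodic2 f) (hg : Periodic2 g) :
    Periodic2 (fun x => f x * g x) := by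
  intro x k
  simp only [hf x k, hg x k]

lemma pd_mul {f g : (Fin 2 → ℝ) → ℝ} (hf : ContDiff ℝ (⊤ : ℕ∞) f)
    (hg : ContDiff ℝ (⊤ : ℕ∞) g) (j : Fin 2) (x : Fin 2 → ℝ) :
    pd j (fun y => f y * g y) x = pd j f x * g x + f x * pd j g x := by
  unfold pd
  rw [fderiv_fun_mul (hf.differentiable (by simp) x) (hg.differentiable (by simp) x)]
  simp
  ring

/-- A derivative of a periodic function has mean zero: the two faces of the box orthogonal to the
direction of differentiation contribute opposite boundary terms. -/
lemma integral_pd_eq_zero {f : (Fin 2 → ℝ) → ℝ} (hf : ContDiff ℝ (⊤ : ℕ∞) f)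
    (hp : Periodic2 f) (j : Fin 2) : ∫ x in Q2, pd j f x = 0 := by
  -- The divergence theorem is applied to the field whose only nonzero component is the `j`-th.
  have hsum : ∀ x, ∑ i : Fin 2, (if i = j then fderiv ℝ f x else 0) (Pi.single i 1)
      = pd j f x := by
    intro x
    fin_cases j <;> simp [Fin.sum_univ_two, pd]
  have key := integral_divergence_of_hasFDerivAt_off_countable' (n := 1) (E := ℝ)
    (0 : Fin 2 → ℝ) 1 (fun i => by simp)
    (fun i x => if i = j then f x else 0) (fun i x => if i = j then fderiv ℝ f x else 0)
    ∅ Set.countable_empty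
    (fun i => by
      by_cases h : i = j
      · simpa [h] using hf.continuous.continuousOn
      · simpa [h] using continuousOn_const)
    (fun x _ i => by
      by_cases h : i = j
      · simpa [h] using (hf.differentiable (by simp) x).hasFDerivAt
      · simpa [h] using hasFDerivAt_const (0 : ℝ) x)
    (by
      refine (continuous_integrableOn_Q2 (contDiff_pd hf j).continuous).congr_fun
        (fun x _ => (hsum x).symm) measurableSet_Icc)
  simp only [hsum] at key
  refine key.trans (Finset.sum_eq_zero fun i _ => ?_)
  by_cases h : i = j
  · subst h
    rw [sub_eq_zero]
    refine integral_congr_ae (Filter.Eventually.of_forall fun y => ?_)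
    have := hp (i.insertNth 0 y) (Pi.single i 1)
    simp only [if_true]
    rw [Pi.one_apply, Pi.zero_apply, ← this]
    congr 1
    ext l
    refine Fin.succAboveCases i ?_ (fun m => ?_) l
    · simp
    · simp [Fin.succAbove_ne]
  · simp [h]

/-- Cauchy–Schwarz in `L²(Q; ℝ²)`, via the discriminant of the nonnegative quadratic
`t ↦ ‖t (a, b) + (c, d)‖²`. -/
lemma cauchy_schwarz_Q2 {a b c d : (Fin 2 → ℝ) → ℝ} (ha : Continuous a) (hb : Continuous b)
    (hc : Continuous c) (hd : Continuous d) :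
    |∫ x in Q2, (a x * c x + b x * d x)|
      ≤ Real.sqrt (∫ x in Q2, (a x ^ 2 + b x ^ 2))
        * Real.sqrt (∫ x in Q2, (c x ^ 2 + d x ^ 2)) := by
  have hA : IntegrableOn (fun x => a x ^ 2 + b x ^ 2) Q2 :=
    continuous_integrableOn_Q2 (by fun_prop)
  have hG : IntegrableOn (fun x => a x * c x + b x * d x) Q2 :=
    continuous_integrableOn_Q2 (by fun_prop)
  have hB : IntegrableOn (fun x => c x ^ 2 + d x ^ 2) Q2 :=
    continuous_integrableOn_Q2 (by fun_prop)
  have hA0 : 0 ≤ ∫ x in Q2, (a x ^ 2 + b x ^ 2) := integral_nonneg fun x => by positivity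
  have hquad : ∀ t : ℝ, 0 ≤ (∫ x in Q2, (a x ^ 2 + b x ^ 2)) * (t * t)
      + (2 * ∫ x in Q2, (a x * c x + b x * d x)) * t + ∫ x in Q2, (c x ^ 2 + d x ^ 2) := by
    intro t
    have h0 : 0 ≤ ∫ x in Q2, ((t * a x + c x) ^ 2 + (t * b x + d x) ^ 2) :=
      integral_nonneg fun x => by positivity
    have h1 : ∫ x in Q2, ((t * a x + c x) ^ 2 + (t * b x + d x) ^ 2)
        = ∫ x in Q2, ((t * t) * (a x ^ 2 + b x ^ 2) + (2 * t) * (a x * c x + b x * d x)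
            + (c x ^ 2 + d x ^ 2)) := by
      congr 1
      ext x
      ring
    rw [h1, integral_Q2_add_add (hA.const_mul _) (hG.const_mul _) hB, integral_const_mul,
      integral_const_mul] at h0
    linarith
  have hdisc := discrim_le_zero hquad
  unfold discrim at hdisc
  rw [← Real.sqrt_mul hA0]
  apply Real.abs_le_sqrt
  linarith

theorem stmt13
    (ξ : (Fin 2 → ℝ) → ℝ) (v : (Fin 2 → ℝ) → (Fin 2 → ℝ))
    (hξ : ContDiff ℝ (⊤ : ℕ∞) ξ) (hv : ContDiff ℝ (⊤ : ℕ∞) v)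
    (hξp : Periodic2 ξ) (hvp : ∀ i, Periodic2 (fun x => v x i))
    (hdiv : ∀ x, pd 0 (fun y => v y 0) x + pd 1 (fun y => v y 1) x = 0) :
    |∫ x in Q2, (pd 0 (pd 0 ξ) x + pd 1 (pd 1 ξ) x) * v x 1|
      ≤ Real.sqrt (∫ x in Q2, ((pd 0 ξ x) ^ 2 + (pd 1 ξ x) ^ 2))
        * Real.sqrt (∫ x in Q2, ((pd 0 (fun y => v y 0) x) ^ 2
            + (pd 0 (fun y => v y 1) x) ^ 2)) := by
  have hvi : ∀ i, ContDiff ℝ (⊤ : ℕ∞) (fun x => v x i) := fun i => contDiff_pi.1 hv i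
  have hprod : ∀ j, ContDiff ℝ (⊤ : ℕ∞) (fun x => pd j ξ x * v x 1) :=
    fun j => (contDiff_pd hξ j).mul (hvi 1)
  have hint : ∀ j, IntegrableOn (pd j (fun x => pd j ξ x * v x 1)) Q2 :=
    fun j => continuous_integrableOn_Q2 (contDiff_pd (hprod j) j).continuous
  have hzero : ∀ j, ∫ x in Q2, pd j (fun x => pd j ξ x * v x 1) x = 0 :=
    fun j => integral_pd_eq_zero (hprod j) ((hξp.pd j).mul (hvp 1)) j
  have c0 := (contDiff_pd hξ 0).continuous
  have c1 := (contDiff_pd hξ 1).continuous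
  have d0 := (contDiff_pd (hvi 0) 0).continuous
  have d1 := (contDiff_pd (hvi 1) 0).continuous
  have hG : IntegrableOn (fun x => pd 1 ξ x * pd 0 (fun y => v y 0) x
      + (-pd 0 ξ x) * pd 0 (fun y => v y 1) x) Q2 :=
    continuous_integrableOn_Q2 ((c1.mul d0).add (c0.neg.mul d1))
  have hpt : ∀ x, (pd 0 (pd 0 ξ) x + pd 1 (pd 1 ξ) x) * v x 1
      = pd 0 (fun x => pd 0 ξ x * v x 1) x + pd 1 (fun x => pd 1 ξ x * v x 1) x
        + (pd 1 ξ x * pd 0 (fun y => v y 0) x + (-pd 0 ξ x) * pd 0 (fun y => v y 1) x) := by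
    intro x
    rw [pd_mul (contDiff_pd hξ 0) (hvi 1), pd_mul (contDiff_pd hξ 1) (hvi 1)]
    linear_combination (-pd 1 ξ x) * hdiv x
  have hI : ∫ x in Q2, (pd 0 (pd 0 ξ) x + pd 1 (pd 1 ξ) x) * v x 1
      = ∫ x in Q2, (pd 1 ξ x * pd 0 (fun y => v y 0) x
          + (-pd 0 ξ x) * pd 0 (fun y => v y 1) x) := by
    simp only [hpt]
    rw [integral_Q2_add_add (hint 0) (hint 1) hG, hzero, hzero]
    simp
  have hcs := cauchy_schwarz_Q2 c1 c0.neg d0 d1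
  have hA : ∫ x in Q2, ((pd 0 ξ x) ^ 2 + (pd 1 ξ x) ^ 2)
      = ∫ x in Q2, ((pd 1 ξ x) ^ 2 + (-pd 0 ξ x) ^ 2) := by
    congr 1
    ext x
    ring
  rw [hI, hA]
  exact hcs
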